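/- Let s_{0,0}, s_{0,1}, s_{1,0}, s_{1,1} be real numbers with s_{0,0} > 0, and let a_0, a_1 be any real numbers with a_0 < s_{0,1}/s_{0,0} < a_1. Then there exists a nonnegative Borel measure μ on ℝ², supported in the union of the two horizontal lines {x_2 = a_0} and {x_2 = a_1}, such that ∫_{ℝ²} x_1^m x_2^n dμ = s_{m,n} for all m, n ∈ {0,1}. -/

import Mathlib

open MeasureTheory

/-- Integration against a positive combination of two point masses. -/
lemma integrable_and_integral_two_dirac {α : Type*} [MeasurableSpace α]
    [MeasurableSingletonClass α] (f : α → ℝ) (p q : α) {v w : ℝ} (hv : 0 ≤ v) (hw : 0 ≤ w) :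
    Integrable f (ENNReal.ofReal v • Measure.dirac p + ENNReal.ofReal w • Measure.dirac q) ∧
      ∫ x, f x ∂(ENNReal.ofReal v • Measure.dirac p + ENNReal.ofReal w • Measure.dirac q) =
        v * f p + w * f q := by
  have hp : Integrable f (ENNReal.ofReal v • Measure.dirac p) :=
    (integrable_dirac (by simp)).smul_measure ENNReal.ofReal_ne_top
  have hq : Integrable f (ENNReal.ofReal w • Measure.dirac q) :=
    (integrable_dirac (by simp)).smul_measure ENNReal.ofReal_ne_top
  refine ⟨hp.add_measure hq, ?_⟩
  rw [integral_add_measure hp hq]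
  simp [integral_smul_measure, ENNReal.toReal_ofReal, hv, hw]

/-- Construction of solutions in the case `(ii)` of Theorem 2.1: if `s_{0,0} > 0` and
`a_0 < s_{0,1}/s_{0,0} < a_1`, then the truncated two-dimensional moment problem with
`M = N = 1` has a solution supported in the union of the lines `x_2 = a_0`, `x_2 = a_1`. -/
theorem truncated_moment_problem_M1_N1_solution_on_two_lines
    (s : ℕ → ℕ → ℝ) (h : 0 < s 0 0) (a0 a1 : ℝ)
    (h0 : a0 < s 0 1 / s 0 0) (h1 : s 0 1 / s 0 0 < a1) :
    ∃ μ : Measure (ℝ × ℝ),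
      μ ({p : ℝ × ℝ | p.2 = a0} ∪ {p : ℝ × ℝ | p.2 = a1})ᶜ = 0 ∧
      ∀ m ≤ 1, ∀ n ≤ 1,
        Integrable (fun p : ℝ × ℝ => p.1 ^ m * p.2 ^ n) μ ∧
        ∫ p : ℝ × ℝ, p.1 ^ m * p.2 ^ n ∂μ = s m n := by
  rw [lt_div_iff₀ h] at h0
  rw [div_lt_iff₀ h] at h1
  have hd : 0 < a1 - a0 := by nlinarith
  have hu : 0 < a1 * s 0 0 - s 0 1 := by linarith
  have hv : 0 < s 0 1 - a0 * s 0 0 := by linarith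
  have key := fun f : ℝ × ℝ → ℝ => integrable_and_integral_two_dirac f
    ((a1 * s 1 0 - s 1 1) / (a1 * s 0 0 - s 0 1), a0)
    ((s 1 1 - a0 * s 1 0) / (s 0 1 - a0 * s 0 0), a1)
    (div_pos hu hd).le (div_pos hv hd).le
  refine ⟨_, ?_, fun m hm n hn => ⟨(key _).1, (key _).2.trans ?_⟩⟩
  · simp
  · have hd' := hd.ne'
    have hu' := hu.ne'
    have hv' : s 0 1 - s 0 0 * a0 ≠ 0 := mul_comm a0 (s 0 0) ▸ hv.ne'
    interval_cases m <;> interval_cases n <;> simp only [pow_zero, pow_one, one_mul, mul_one] <;>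
      field_simp <;> ring
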